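/- Let f be a probability density on [0,1] that is twice continuously differentiable with bounded second derivative. With h = 1/m, B_j = [(j−1)h, jh), p_j = ∫_{B_j} f, and bias b(x) = p_j/h − f(x) for x ∈ B_j, one has ∫_0^1 b(x)² dx = (h²/12) ∫_0^1 (f'(x))² dx + O(h³) as m → ∞; in particular ∫_0^1 b(x)² dx = (h²/12) ∫_0^1 (f'(x))² dx + o(h²). -/

import Mathlib

open MeasureTheory Filter

/-- First-order Taylor estimate for a function whose derivative is `M`-Lipschitz. -/
lemma abs_sub_affine_le {f : ℝ → ℝ} {M a h x : ℝ} (hd : Differentiable ℝ f)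
    (hlip : ∀ x y, |deriv f y - deriv f x| ≤ M * |y - x|)
    (hM : 0 ≤ M) (hx : x ∈ Set.Icc a (a + h)) :
    |f x - f a - deriv f a * (x - a)| ≤ M * h ^ 2 := by
  have hh : 0 ≤ h := by linarith [hx.1, hx.2]
  have hderiv : ∀ y ∈ Set.Icc a (a + h), HasDerivWithinAt
      (fun y => f y - deriv f a * (y - a)) (deriv f y - deriv f a) (Set.Icc a (a + h)) y := by
    intro y _
    have := (hd y).hasDerivAt.sub (((hasDerivAt_id y).sub_const a).const_mul (deriv f a))
    rw [mul_one] at this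
    exact this.hasDerivWithinAt
  have hbound : ∀ y ∈ Set.Icc a (a + h), ‖deriv f y - deriv f a‖ ≤ M * h := by
    intro y hy
    refine (hlip a y).trans (mul_le_mul_of_nonneg_left ?_ hM)
    rw [abs_of_nonneg] <;> linarith [hy.1, hy.2]
  have key := (convex_Icc a (a + h)).norm_image_sub_le_of_norm_hasDerivWithin_le hderiv hbound
    (Set.left_mem_Icc.2 (by linarith)) hx
  have hxa : ‖x - a‖ ≤ h := by
    rw [Real.norm_eq_abs, abs_of_nonneg] <;> linarith [hx.1, hx.2]
  calc |f x - f a - deriv f a * (x - a)|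
      = ‖(f x - deriv f a * (x - a)) - (f a - deriv f a * (a - a))‖ := by
        rw [Real.norm_eq_abs]; ring_nf
    _ ≤ M * h * ‖x - a‖ := key
    _ ≤ M * h * h := mul_le_mul_of_nonneg_left hxa (mul_nonneg hM hh)
    _ = M * h ^ 2 := by ring

lemma integral_affine (a h c d : ℝ) :
    ∫ x in a..a + h, (c + d * (x - a)) = c * h + d * h ^ 2 / 2 := by
  rw [intervalIntegral.integral_comp_sub_right (fun x => c + d * x) a,
    intervalIntegral.integral_add (by simp) (by apply Continuous.intervalIntegrable; fun_prop),
    intervalIntegral.integral_const_mul]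
  simp
  ring

lemma integral_centered_sq_sub (a h d : ℝ) :
    ∫ x in a..a + h, d ^ 2 * ((h / 2 - (x - a)) ^ 2 - h ^ 2 / 12) = 0 := by
  rw [intervalIntegral.integral_const_mul,
    intervalIntegral.integral_comp_sub_right (fun x => (h / 2 - x) ^ 2 - h ^ 2 / 12) a,
    intervalIntegral.integral_sub (by apply Continuous.intervalIntegrable; fun_prop) (by simp),
    intervalIntegral.integral_comp_sub_left (fun x => x ^ 2) (h / 2)]
  simp
  right
  ring

/-- Algebraic form of the pointwise bias expansion: `D` is the derivative at the left end of the
bin, `t` the offset from the bin midpoint, `e` the Taylor remainder and `q` the increment of the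
derivative. -/
lemma abs_bias_expansion_le {D t e q h K M : ℝ} (hh : 0 ≤ h) (hh1 : h ≤ 1) (hM : 0 ≤ M)
    (hK : 0 ≤ K) (hD : |D| ≤ K) (hDq : |D + q| ≤ K) (ht : |t| ≤ h / 2)
    (he : |e| ≤ 2 * M * h ^ 2) (hq : |q| ≤ M * h) :
    |(D * t + e) ^ 2 - h ^ 2 / 12 * (D + q) ^ 2 - D ^ 2 * (t ^ 2 - h ^ 2 / 12)|
      ≤ (3 * K * M + 4 * M ^ 2) * h ^ 3 := by
  have hcross : |2 * D * t * e| ≤ 2 * K * (h / 2) * (2 * M * h ^ 2) := by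
    rw [abs_mul, abs_mul, abs_mul, abs_two]
    gcongr
  have hsq : |e ^ 2| ≤ (2 * M * h ^ 2) ^ 2 := by
    rw [abs_pow]
    gcongr
  have hder : |h ^ 2 / 12 * (q * (D + (D + q)))| ≤ h ^ 2 / 12 * (M * h * (K + K)) := by
    rw [abs_mul, abs_mul, abs_of_nonneg (by positivity : 0 ≤ h ^ 2 / 12)]
    gcongr
    exact (abs_add_le _ _).trans (add_le_add hD hDq)
  have hh4 : M ^ 2 * h ^ 4 ≤ M ^ 2 * h ^ 3 :=
    mul_le_mul_of_nonneg_left (pow_le_pow_of_le_one hh hh1 (by norm_num)) (sq_nonneg M)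
  have hKM : 0 ≤ K * M * h ^ 3 := by positivity
  have hsplit : (D * t + e) ^ 2 - h ^ 2 / 12 * (D + q) ^ 2 - D ^ 2 * (t ^ 2 - h ^ 2 / 12)
      = 2 * D * t * e + e ^ 2 - h ^ 2 / 12 * (q * (D + (D + q))) := by ring
  rw [hsplit, abs_le]
  rw [abs_le] at hcross hsq hder
  constructor <;> nlinarith

/-- Integrated squared bias over a single bin `[a, a + h]`. -/
lemma abs_integral_bin_le {f : ℝ → ℝ} {M K a h A : ℝ} (hd : Differentiable ℝ f)
    (hc' : Continuous (deriv f)) (hlip : ∀ x y, |deriv f y - deriv f x| ≤ M * |y - x|)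
    (hM : 0 ≤ M) (hh : 0 < h) (hh1 : h ≤ 1)
    (hK : ∀ x ∈ Set.Icc a (a + h), |deriv f x| ≤ K)
    (hA : A * h = ∫ u in a..a + h, f u) :
    |∫ x in a..a + h, ((A - f x) ^ 2 - h ^ 2 / 12 * deriv f x ^ 2)|
      ≤ (3 * K * M + 4 * M ^ 2) * h ^ 3 * h := by
  have hc : Continuous f := hd.continuous
  have hle : a ≤ a + h := by linarith
  have haK := hK a (Set.left_mem_Icc.2 hle)
  have hmean : |A - f a - deriv f a * h / 2| ≤ M * h ^ 2 := by
    have hint : (A - f a - deriv f a * h / 2) * h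
        = ∫ u in a..a + h, (f u - (f a + deriv f a * (u - a))) := by
      rw [intervalIntegral.integral_sub (hc.intervalIntegrable _ _)
        (by apply Continuous.intervalIntegrable; fun_prop), integral_affine, ← hA]
      ring
    have hbound := intervalIntegral.norm_integral_le_of_norm_le_const (a := a) (b := a + h)
      (f := fun u => f u - (f a + deriv f a * (u - a))) (C := M * h ^ 2) (by
        intro u hu
        rw [Set.uIoc_of_le hle] at hu
        have := abs_sub_affine_le hd hlip hM (Set.Ioc_subset_Icc_self hu)
        rwa [sub_sub] at this)
    rw [← hint, Real.norm_eq_abs, abs_mul, add_sub_cancel_left, abs_of_pos hh] at hbound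
    exact le_of_mul_le_mul_right hbound hh
  have hint : ∫ x in a..a + h, ((A - f x) ^ 2 - h ^ 2 / 12 * deriv f x ^ 2)
      = ∫ x in a..a + h, ((A - f x) ^ 2 - h ^ 2 / 12 * deriv f x ^ 2
          - deriv f a ^ 2 * ((h / 2 - (x - a)) ^ 2 - h ^ 2 / 12)) := by
    rw [intervalIntegral.integral_sub (g := fun x => deriv f a ^ 2 * _)
      (by apply Continuous.intervalIntegrable; fun_prop)
      (by apply Continuous.intervalIntegrable; fun_prop), integral_centered_sq_sub, sub_zero]
  rw [hint]
  have hbound := intervalIntegral.norm_integral_le_of_norm_le_const (a := a) (b := a + h)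
    (f := fun x => (A - f x) ^ 2 - h ^ 2 / 12 * deriv f x ^ 2
          - deriv f a ^ 2 * ((h / 2 - (x - a)) ^ 2 - h ^ 2 / 12))
    (C := (3 * K * M + 4 * M ^ 2) * h ^ 3) (by
      intro x hx
      rw [Set.uIoc_of_le hle] at hx
      have hx' := Set.Ioc_subset_Icc_self hx
      have hr := abs_sub_affine_le hd hlip hM hx'
      have hq : |deriv f x - deriv f a| ≤ M * h := by
        refine (hlip a x).trans (mul_le_mul_of_nonneg_left ?_ hM)
        rw [abs_of_nonneg] <;> linarith [hx.1, hx.2]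
      have ht : |h / 2 - (x - a)| ≤ h / 2 := by
        rw [abs_le]
        constructor <;> linarith [hx.1, hx.2]
      have he : |(A - f a - deriv f a * h / 2) - (f x - f a - deriv f a * (x - a))|
          ≤ 2 * M * h ^ 2 := by
        refine (abs_sub _ _).trans ?_
        linarith
      have key := abs_bias_expansion_le hh.le hh1 hM ((abs_nonneg _).trans haK) haK
        (by simpa using hK x hx') ht he hq
      rw [Real.norm_eq_abs]
      convert key using 2
      ring)
  simpa [abs_of_pos hh] using hbound

lemma floor_mul_eq_of_mem_bin {m k : ℕ} {x : ℝ} (hm : 0 < m)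
    (hx : x ∈ Set.Ioo ((k : ℝ) / m) ((k + 1 : ℕ) / m : ℝ)) : ⌊x * (m : ℝ)⌋ = (k : ℤ) := by
  have hm' : (0 : ℝ) < m := by exact_mod_cast hm
  have h1 := (div_lt_iff₀ hm').1 hx.1
  have h2 := (lt_div_iff₀ hm').1 hx.2
  rw [Int.floor_eq_iff]
  push_cast at h2 ⊢
  exact ⟨h1.le, h2⟩

/-- Integrated squared bias of the histogram with `m` bins, with an explicit constant. -/
lemma abs_histogram_integrated_sq_bias_sub_le {f : ℝ → ℝ} {M K : ℝ} (hd : Differentiable ℝ f)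
    (hc' : Continuous (deriv f)) (hlip : ∀ x y, |deriv f y - deriv f x| ≤ M * |y - x|)
    (hM : 0 ≤ M) (hK : ∀ x ∈ Set.Icc (0 : ℝ) 1, |deriv f x| ≤ K) {m : ℕ} (hm : 1 ≤ m) :
    |(∫ x in Set.Icc (0:ℝ) 1,
          ((∫ u in Set.Ico ((⌊x * (m : ℝ)⌋ : ℝ) / m) (((⌊x * (m : ℝ)⌋ : ℝ) + 1) / m), f u)
            * m - f x) ^ 2)
        - (1 / m : ℝ) ^ 2 / 12 * ∫ x in Set.Icc (0:ℝ) 1, (deriv f x) ^ 2|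
      ≤ (3 * K * M + 4 * M ^ 2) * (1 / m) ^ 3 := by
  have hc : Continuous f := hd.continuous
  have hm0 : (0 : ℝ) < m := by exact_mod_cast hm
  have hm1 : (1 : ℝ) ≤ m := by exact_mod_cast hm
  set g : ℝ → ℝ := fun x =>
    ((∫ u in Set.Ico ((⌊x * (m : ℝ)⌋ : ℝ) / m) (((⌊x * (m : ℝ)⌋ : ℝ) + 1) / m), f u)
      * m - f x) ^ 2 with hg
  set a : ℕ → ℝ := fun k => (k : ℝ) / m with ha
  have hstep : ∀ k, a (k + 1) = a k + 1 / m := by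
    intro k
    simp only [ha]
    push_cast
    ring
  have hmono : ∀ k, a k ≤ a (k + 1) := fun k => by
    rw [hstep]
    exact le_add_of_nonneg_right (by positivity)
  let A : ℕ → ℝ := fun k => (∫ u in a k..a (k + 1), f u) * m
  have hgA : ∀ k, Set.EqOn g (fun x => (A k - f x) ^ 2) (Set.Ioo (a k) (a (k + 1))) := by
    intro k x hx
    have hfl := floor_mul_eq_of_mem_bin hm hx
    simp only [hg, A, hfl]
    rw [integral_Ico_eq_integral_Ioc, intervalIntegral.integral_of_le (hmono k)]
    simp [ha]
  have hgi : ∀ k < m, IntervalIntegrable g volume (a k) (a (k + 1)) := by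
    intro k _
    refine IntervalIntegrable.congr_uIoo (f := fun x => (A k - f x) ^ 2) ?_ ?_
    · apply Continuous.intervalIntegrable
      fun_prop
    · rw [Set.uIoo_of_le (hmono k)]
      exact (hgA k).symm
  have hdi : ∀ k < m, IntervalIntegrable (fun x => deriv f x ^ 2) volume (a k) (a (k + 1)) :=
    fun k _ => (hc'.pow 2).intervalIntegrable _ _
  have h0 : a 0 = 0 := by simp [ha]
  have h1 : a m = 1 := by simp [ha, hm0.ne']
  have hbin : ∀ k ∈ Finset.range m,
      |(∫ x in a k..a (k + 1), g x) - (1 / m : ℝ) ^ 2 / 12 * ∫ x in a k..a (k + 1), deriv f x ^ 2|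
        ≤ (3 * K * M + 4 * M ^ 2) * (1 / m) ^ 3 * (1 / m) := by
    intro k hk
    have hkm : ((k + 1 : ℕ) : ℝ) ≤ m := by exact_mod_cast Finset.mem_range.1 hk
    have hlast : a (k + 1) ≤ 1 := (div_le_one hm0).2 hkm
    have hfirst : 0 ≤ a k := by positivity
    rw [intervalIntegral.integral_congr_Ioo_of_le (hmono k) (hgA k),
      ← intervalIntegral.integral_const_mul, ← intervalIntegral.integral_sub
        (by apply Continuous.intervalIntegrable; fun_prop)
        (by apply Continuous.intervalIntegrable; fun_prop), hstep]
    refine abs_integral_bin_le hd hc' hlip hM (by positivity) ((div_le_one hm0).2 hm1) ?_ ?_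
    · intro x hx
      rw [← hstep] at hx
      exact hK x ⟨hfirst.trans hx.1, hx.2.trans hlast⟩
    · simp only [A, hstep]
      field_simp
  have hsum : ∀ {φ : ℝ → ℝ}, (∀ k < m, IntervalIntegrable φ volume (a k) (a (k + 1))) →
      ∫ x in Set.Icc (0:ℝ) 1, φ x = ∑ k ∈ Finset.range m, ∫ x in a k..a (k + 1), φ x := by
    intro φ hφ
    rw [intervalIntegral.sum_integral_adjacent_intervals hφ, h0, h1,
      intervalIntegral.integral_of_le zero_le_one, integral_Icc_eq_integral_Ioc]
  rw [hsum hgi, hsum hdi, Finset.mul_sum, ← Finset.sum_sub_distrib]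
  refine (Finset.abs_sum_le_sum_abs _ _).trans ((Finset.sum_le_sum hbin).trans_eq ?_)
  rw [Finset.sum_const, Finset.card_range, nsmul_eq_mul]
  field_simp

/-- Integrated squared bias of the histogram: for a probability density `f` on `[0,1]`,
twice continuously differentiable with bounded second derivative, with `h = 1/m`,
bins `Bⱼ = [(j-1)h, jh)`, `pⱼ = ∫_{Bⱼ} f`, and bias `b x = p_{j(x)}/h - f x` (where
`j(x)` indexes the bin containing `x`, so `p_{j(x)}/h = m ∫_{⌊xm⌋/m}^{(⌊xm⌋+1)/m} f`),
one has `∫₀¹ b² = (h²/12) ∫₀¹ (f')² + O(h³)` as `m → ∞`; in particular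
`∫₀¹ b² = (h²/12) ∫₀¹ (f')² + o(h²)`. -/
theorem histogram_integrated_squared_bias
    (f : ℝ → ℝ) (M : ℝ)
    (hf : ContDiff ℝ 2 f)
    (hf'' : ∀ x, |iteratedDeriv 2 f x| ≤ M)
    (hf_nonneg : ∀ x, 0 ≤ f x)
    (hf_int : ∫ x in Set.Icc (0:ℝ) 1, f x = 1) :
    (∃ C : ℝ, ∀ m : ℕ, 1 ≤ m →
      |(∫ x in Set.Icc (0:ℝ) 1,
            ((∫ u in Set.Ico ((⌊x * (m : ℝ)⌋ : ℝ) / m) (((⌊x * (m : ℝ)⌋ : ℝ) + 1) / m), f u)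
              * m - f x) ^ 2)
          - (1 / m : ℝ) ^ 2 / 12 * ∫ x in Set.Icc (0:ℝ) 1, (deriv f x) ^ 2|
        ≤ C * (1 / m) ^ 3) ∧
    Tendsto (fun m : ℕ =>
        ((∫ x in Set.Icc (0:ℝ) 1,
            ((∫ u in Set.Ico ((⌊x * (m : ℝ)⌋ : ℝ) / m) (((⌊x * (m : ℝ)⌋ : ℝ) + 1) / m), f u)
              * m - f x) ^ 2)
          - (1 / m : ℝ) ^ 2 / 12 * ∫ x in Set.Icc (0:ℝ) 1, (deriv f x) ^ 2)
        / (1 / m : ℝ) ^ 2)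
      atTop (nhds 0) := by
  have hd : Differentiable ℝ f := hf.differentiable (by norm_num)
  have hf' : ContDiff ℝ 1 (deriv f) :=
    ((contDiff_succ_iff_deriv (n := 1)).1 (by simpa [one_add_one_eq_two] using hf)).2.2
  have hM : 0 ≤ M := (abs_nonneg _).trans (hf'' 0)
  have hlip : ∀ x y, |deriv f y - deriv f x| ≤ M * |y - x| := by
    intro x y
    refine convex_univ.norm_image_sub_le_of_norm_deriv_le
      (fun z _ => hf'.differentiable (by norm_num) z) (fun z _ => ?_)
      (Set.mem_univ x) (Set.mem_univ y)
    simpa [iteratedDeriv_succ] using hf'' z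
  obtain ⟨K, hK⟩ := isCompact_Icc.exists_bound_of_continuousOn
    (s := Set.Icc (0 : ℝ) 1) hf'.continuous.continuousOn
  have hmain := fun (m : ℕ) (hm : 1 ≤ m) =>
    abs_histogram_integrated_sq_bias_sub_le hd hf'.continuous hlip hM hK hm
  refine ⟨⟨_, hmain⟩, ?_⟩
  have hlim : Tendsto (fun m : ℕ => (3 * K * M + 4 * M ^ 2) * (1 / m : ℝ)) atTop (nhds 0) := by
    rw [← mul_zero (3 * K * M + 4 * M ^ 2)]
    exact tendsto_one_div_atTop_nhds_zero_nat.const_mul _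
  refine squeeze_zero_norm' ?_ hlim
  filter_upwards [eventually_ge_atTop 1] with m hm
  have hpos : (0 : ℝ) < 1 / m := by positivity
  rw [norm_div, Real.norm_eq_abs, Real.norm_eq_abs, abs_of_pos (pow_pos hpos 2),
    div_le_iff₀ (pow_pos hpos 2)]
  exact (hmain m hm).trans_eq (by ring)
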